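/- (Elliptic Sobolev inequality in Orlicz form) Let 1 ≤ q < min{n, g₀} and q* = nq/(n − q). Then there exists a constant c > 0, depending only on n, g₁ and q, such that for every R > 0 and every u ∈ C_c^∞(B_R), where B_R ⊂ ℝⁿ is a ball of radius R, one has (⨍_{B_R} F̃(|u(x)|/R)^{q*} dx)^{1/q*} ≤ c·(⨍_{B_R} G(|Du(x)|) dx)^{1/q}, where ⨍ denotes the integral average. -/

import Mathlib

open Real MeasureTheory Set Filter

open Asymptotics Metric Module Topology

/-!
Write `F`, `F̃` as in the theorem. The inequality `s r ≤ F(s) + G(r)^{1/q}` gives `F̃ ≤ G^{1/q}`, so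
it suffices to bound `w = G(|u|/R)^{1/q}` in `L^{q*}`. Integrating the Orlicz condition yields
`g₀ G(s) ≤ s g(s) ≤ g₁ G(s)`. Since `q < g₀`, the function `w` is `C¹`, and with `t = |u|/R` the
chain rule bounds `(R |Dw|)^q` by `(g₁/q)^q G(t) (|Du|/t)^q`. Where `|Du| ≤ η t`, the product
`G(t) (|Du|/t)^q` is at most `η^q G(t)`; elsewhere the growth of `G` bounds it by
`η^{q-g₁} G(|Du|)`. The Sobolev inequality for `w` thus bounds `(⨍ w^{q*})^{q/q*}` by averages of
`η^q G(|u|/R)` and `η^{q-g₁} G(|Du|)`. As `⨍ G(|u|/R) = ⨍ w^q ≤ (⨍ w^{q*})^{q/q*}`, the former is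
absorbed once `η` is small in terms of `n`, `g₁` and `q`.
-/

/-! ### Functions of power growth -/

/-- On `(0, ∞)`, `f` is positive and has derivative `f'`, and the logarithmic derivative `f' / f`
lies between those of `s ^ a` and `s ^ b`. The Orlicz condition on `g` is the case `a = g₀ - 1`,
`b = g₁ - 1`. -/
structure HasPowerGrowth (a b : ℝ) (f f' : ℝ → ℝ) : Prop where
  pos : ∀ s, 0 < s → 0 < f s
  hasDerivAt : ∀ s, 0 < s → HasDerivAt f (f' s) s
  lower : ∀ s, 0 < s → a * f s ≤ s * f' s
  upper : ∀ s, 0 < s → s * f' s ≤ b * f s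

theorem hasDerivAt_mul_rpow_neg {f : ℝ → ℝ} {f' p s : ℝ} (hs : 0 < s) (hf : HasDerivAt f f' s) :
    HasDerivAt (fun s => f s * s ^ (-p)) ((s * f' - p * f s) * s ^ (-p - 1)) s := by
  refine (hf.mul ((hasDerivAt_id s).rpow_const (p := -p) (Or.inl hs.ne'))).congr_deriv ?_
  rw [id, show s ^ (-p) = s ^ (-p - 1) * s by rw [rpow_sub_one hs.ne']; field_simp]
  ring

theorem integral_div_rpow_sub_one {s c : ℝ} (hs : 0 < s) (hc : 0 < c) :
    ∫ r in (0 : ℝ)..s, (r / s) ^ (c - 1) = s / c := by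
  rw [intervalIntegral.integral_comp_div (fun r => r ^ (c - 1)) hs.ne', zero_div, div_self hs.ne',
    integral_rpow (Or.inl (by linarith)), sub_add_cancel, one_rpow, zero_rpow hc.ne']
  simp [div_eq_mul_inv]

theorem intervalIntegrable_div_rpow_sub_one {s c : ℝ} (hc : 0 < c) :
    IntervalIntegrable (fun r => (r / s) ^ (c - 1)) volume 0 s := by
  rcases eq_or_ne s 0 with rfl | hs
  · exact IntervalIntegrable.refl
  · have h01 : IntervalIntegrable (fun r : ℝ => r ^ (c - 1)) volume 0 1 :=
      intervalIntegral.intervalIntegrable_rpow' (by linarith)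
    simpa [hs, div_eq_mul_inv] using h01.comp_mul_right (c := s⁻¹)

namespace HasPowerGrowth

variable {a b : ℝ} {f f' : ℝ → ℝ}

theorem exponent_le (h : HasPowerGrowth a b f f') : a ≤ b :=
  le_of_mul_le_mul_right ((h.lower 1 one_pos).trans (h.upper 1 one_pos)) (h.pos 1 one_pos)

theorem continuousOn (h : HasPowerGrowth a b f f') : ContinuousOn f (Ioi 0) := fun s hs =>
  (h.hasDerivAt s hs).continuousAt.continuousWithinAt

theorem monotoneOn_mul_rpow_neg (h : HasPowerGrowth a b f f') :
    MonotoneOn (fun s => f s * s ^ (-a)) (Ioi 0) := by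
  have hderiv s (hs : 0 < s) := hasDerivAt_mul_rpow_neg (p := a) hs (h.hasDerivAt s hs)
  refine monotoneOn_of_hasDerivWithinAt_nonneg (convex_Ioi 0)
    (fun s hs => (hderiv s hs).continuousAt.continuousWithinAt)
    (fun s hs => (hderiv s (interior_subset hs)).hasDerivWithinAt) fun s hs => ?_
  have hs : 0 < s := interior_subset hs
  exact mul_nonneg (sub_nonneg.2 (h.lower s hs)) (by positivity)

theorem antitoneOn_mul_rpow_neg (h : HasPowerGrowth a b f f') :
    AntitoneOn (fun s => f s * s ^ (-b)) (Ioi 0) := by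
  have hderiv s (hs : 0 < s) := hasDerivAt_mul_rpow_neg (p := b) hs (h.hasDerivAt s hs)
  refine antitoneOn_of_hasDerivWithinAt_nonpos (convex_Ioi 0)
    (fun s hs => (hderiv s hs).continuousAt.continuousWithinAt)
    (fun s hs => (hderiv s (interior_subset hs)).hasDerivWithinAt) fun s hs => ?_
  have hs : 0 < s := interior_subset hs
  exact mul_nonpos_of_nonpos_of_nonneg (sub_nonpos.2 (h.upper s hs)) (by positivity)

theorem le_mul_div_rpow (h : HasPowerGrowth a b f f') {r s : ℝ} (hr : 0 < r) (hrs : r ≤ s) :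
    f r ≤ f s * (r / s) ^ a := by
  have hs := hr.trans_le hrs
  calc f r = f r * r ^ (-a) * r ^ a := by rw [mul_assoc, ← rpow_add hr]; simp
    _ ≤ f s * s ^ (-a) * r ^ a := by
      gcongr ?_ * _
      exact h.monotoneOn_mul_rpow_neg hr hs hrs
    _ = f s * (r / s) ^ a := by rw [div_rpow hr.le hs.le, rpow_neg hs.le]; ring

theorem mul_div_rpow_le (h : HasPowerGrowth a b f f') {r s : ℝ} (hr : 0 < r) (hrs : r ≤ s) :
    f s * (r / s) ^ b ≤ f r := by
  have hs := hr.trans_le hrs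
  calc f s * (r / s) ^ b = f s * s ^ (-b) * r ^ b := by
        rw [div_rpow hr.le hs.le, rpow_neg hs.le]; ring
    _ ≤ f r * r ^ (-b) * r ^ b := by
      gcongr ?_ * _
      exact h.antitoneOn_mul_rpow_neg hr hs hrs
    _ = f r := by rw [mul_assoc, ← rpow_add hr]; simp

theorem intervalIntegrable (h : HasPowerGrowth (a - 1) b f f') (ha : 0 < a) {s : ℝ} (hs : 0 < s) :
    IntervalIntegrable f volume 0 s := by
  refine ((intervalIntegrable_div_rpow_sub_one ha).const_mul (f s)).mono_fun
    ((h.continuousOn.mono ?_).aestronglyMeasurable measurableSet_uIoc)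
    ((ae_restrict_mem measurableSet_uIoc).mono fun r hr => ?_)
  all_goals rw [uIoc_of_le hs.le] at *
  · exact fun r hr => hr.1
  · refine (norm_of_nonneg (h.pos r hr.1).le).trans_le ?_
    exact (h.le_mul_div_rpow hr.1 hr.2).trans (le_norm_self _)

theorem integral (h : HasPowerGrowth (a - 1) (b - 1) f f') (ha : 0 < a) :
    HasPowerGrowth a b (fun s => ∫ r in (0 : ℝ)..s, f r) f where
  pos s hs := intervalIntegral.intervalIntegral_pos_of_pos_on (h.intervalIntegrable ha hs)
    (fun r hr => h.pos r hr.1) hs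
  hasDerivAt s hs := intervalIntegral.integral_hasDerivAt_right (h.intervalIntegrable ha hs)
    (h.continuousOn.stronglyMeasurableAtFilter isOpen_Ioi s hs) (h.hasDerivAt s hs).continuousAt
  lower s hs := by
    rw [← le_div_iff₀' ha]
    calc ∫ r in (0 : ℝ)..s, f r ≤ ∫ r in (0 : ℝ)..s, f s * (r / s) ^ (a - 1) :=
          intervalIntegral.integral_mono_on_of_le_Ioo hs.le (h.intervalIntegrable ha hs)
            ((intervalIntegrable_div_rpow_sub_one ha).const_mul _)
            fun r hr => h.le_mul_div_rpow hr.1 hr.2.le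
      _ = s * f s / a := by
        rw [intervalIntegral.integral_const_mul, integral_div_rpow_sub_one hs ha]; ring
  upper s hs := by
    have hb : 0 < b := ha.trans_le (by linarith [h.exponent_le])
    rw [← div_le_iff₀' hb]
    calc s * f s / b = ∫ r in (0 : ℝ)..s, f s * (r / s) ^ (b - 1) := by
          rw [intervalIntegral.integral_const_mul, integral_div_rpow_sub_one hs hb]; ring
      _ ≤ ∫ r in (0 : ℝ)..s, f r :=
          intervalIntegral.integral_mono_on_of_le_Ioo hs.le
            ((intervalIntegrable_div_rpow_sub_one hb).const_mul _) (h.intervalIntegrable ha hs)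
            fun r hr => h.mul_div_rpow_le hr.1 hr.2.le

end HasPowerGrowth

/-- An Orlicz function: a `C¹` function `G` on `(0, ∞)` with derivative `g`, growing between `s ^ a`
and `s ^ b`, and with `G 0 = 0`. -/
structure IsOrliczFunction (a b : ℝ) (G g : ℝ → ℝ) : Prop extends HasPowerGrowth a b G g where
  map_zero : G 0 = 0
  continuousOn_deriv : ContinuousOn g (Ioi 0)

theorem HasPowerGrowth.isOrliczFunction_integral {a b : ℝ} {g g' : ℝ → ℝ}
    (h : HasPowerGrowth (a - 1) (b - 1) g g') (ha : 0 < a) :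
    IsOrliczFunction a b (fun s => ∫ r in (0 : ℝ)..s, g r) g :=
  ⟨h.integral ha, intervalIntegral.integral_same, h.continuousOn⟩

theorem isLittleO_rpow_rpow_atTop {a b : ℝ} (hab : a < b) :
    (fun r : ℝ => r ^ a) =o[atTop] fun r => r ^ b := by
  refine (isLittleO_iff_tendsto' ?_).2 ((tendsto_rpow_neg_atTop (sub_pos.2 hab)).congr' ?_)
  · filter_upwards [eventually_gt_atTop 0] with r hr hr0
    exact absurd hr0 (rpow_pos_of_pos hr b).ne'
  · filter_upwards [eventually_gt_atTop 0] with r hr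
    rw [neg_sub, rpow_sub hr]

namespace IsOrliczFunction

variable {a b q : ℝ} {G g : ℝ → ℝ}

theorem nonneg (h : IsOrliczFunction a b G g) {s : ℝ} (hs : 0 ≤ s) : 0 ≤ G s := by
  rcases hs.eq_or_lt with rfl | hs
  · exact h.map_zero.ge
  · exact (h.pos s hs).le

theorem rpow_mul_le (h : IsOrliczFunction a b G g) {r s : ℝ} (hr : 1 ≤ r) (hs : 0 ≤ s) :
    r ^ a * G s ≤ G (r * s) := by
  rcases hs.eq_or_lt with rfl | hs
  · simp [h.map_zero]
  have hr0 : 0 < r := one_pos.trans_le hr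
  have hle := h.le_mul_div_rpow hs (le_mul_of_one_le_left hs.le hr)
  rwa [div_mul_cancel_right₀ hs.ne', inv_rpow hr0.le, ← div_eq_mul_inv,
    le_div_iff₀' (by positivity)] at hle

theorem le_rpow_mul (h : IsOrliczFunction a b G g) {r s : ℝ} (hr : 1 ≤ r) (hs : 0 ≤ s) :
    G (r * s) ≤ r ^ b * G s := by
  rcases hs.eq_or_lt with rfl | hs
  · simp [h.map_zero]
  have hr0 : 0 < r := one_pos.trans_le hr
  have hle := h.mul_div_rpow_le hs (le_mul_of_one_le_left hs.le hr)
  rwa [div_mul_cancel_right₀ hs.ne', inv_rpow hr0.le, ← div_eq_mul_inv,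
    div_le_iff₀' (by positivity)] at hle

theorem le_mul_rpow (h : IsOrliczFunction a b G g) (ha : 0 < a) {s : ℝ} (hs : 0 ≤ s)
    (hs1 : s ≤ 1) : G s ≤ G 1 * s ^ a := by
  rcases hs.eq_or_lt with rfl | hs
  · simp [h.map_zero, ha.ne']
  · simpa using h.le_mul_div_rpow hs hs1

theorem mul_div_rpow_le_add (h : IsOrliczFunction a b G g) (hq : 0 < q) (hqa : q ≤ a) {η t ρ : ℝ}
    (hη : 0 < η) (hη1 : η ≤ 1) (ht : 0 < t) (hρ : 0 ≤ ρ) :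
    G t * (ρ / t) ^ q ≤ η ^ q * G t + η ^ (q - b) * G ρ := by
  have hGt := h.nonneg ht.le
  have hGρ := h.nonneg hρ
  rcases le_total (ρ / t) η with hsmall | hlarge
  · calc G t * (ρ / t) ^ q ≤ η ^ q * G t := by rw [mul_comm]; gcongr
      _ ≤ η ^ q * G t + η ^ (q - b) * G ρ := le_add_of_nonneg_right (by positivity)
  · set r := ρ / t / η with hr
    have hr1 : 1 ≤ r := (one_le_div hη).2 hlarge
    calc G t * (ρ / t) ^ q = η ^ q * (r ^ q * G t) := by
          rw [hr, div_rpow (by positivity) hη.le]; field_simp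
      _ ≤ η ^ q * (r ^ a * G t) := by gcongr
      _ ≤ η ^ q * G (η⁻¹ * ρ) := by
          rw [show η⁻¹ * ρ = r * t by rw [hr]; field_simp]
          gcongr
          exact h.rpow_mul_le hr1 ht.le
      _ ≤ η ^ q * (η⁻¹ ^ b * G ρ) := by
          gcongr
          exact h.le_rpow_mul ((one_le_inv₀ hη).2 hη1) hρ
      _ = η ^ (q - b) * G ρ := by rw [inv_rpow hη.le, rpow_sub hη]; ring
      _ ≤ η ^ q * G t + η ^ (q - b) * G ρ := le_add_of_nonneg_left (by positivity)

theorem isLittleO_rpow (h : IsOrliczFunction a b G g) (hqa : q < a) :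
    (fun r => r ^ q) =o[atTop] G := by
  have hO : (fun r : ℝ => r ^ a) =O[atTop] G := by
    refine IsBigO.of_bound (G 1)⁻¹ ((eventually_ge_atTop 1).mono fun r hr => ?_)
    have hr0 : 0 ≤ r := zero_le_one.trans hr
    rw [norm_of_nonneg (by positivity), norm_of_nonneg (h.nonneg hr0),
      le_inv_mul_iff₀' (h.pos 1 one_pos)]
    simpa using h.rpow_mul_le hr zero_le_one
  exact (isLittleO_rpow_rpow_atTop hqa).trans_isBigO hO

theorem continuous_comp_abs (h : IsOrliczFunction a b G g) (ha : 0 < a) :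
    Continuous fun t : ℝ => G |t| := by
  refine continuous_iff_continuousAt.2 fun t => ?_
  rcases eq_or_ne t 0 with rfl | ht
  · have hlim : Tendsto (fun t : ℝ => G 1 * |t| ^ a) (𝓝 0) (𝓝 0) := by
      simpa [ha.ne'] using
        ((continuous_abs.rpow_const fun _ => Or.inr ha.le).const_mul (G 1)).tendsto 0
    rw [ContinuousAt, abs_zero, h.map_zero]
    refine squeeze_zero' (Eventually.of_forall fun t => h.nonneg (abs_nonneg t)) ?_ hlim
    filter_upwards [Metric.closedBall_mem_nhds (0 : ℝ) one_pos] with t ht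
    exact h.le_mul_rpow ha (abs_nonneg t) (mem_closedBall_zero_iff.1 ht)
  · exact ContinuousAt.comp' (h.hasDerivAt _ (abs_pos.2 ht)).continuousAt
      continuous_abs.continuousAt

theorem continuous_comp_norm (h : IsOrliczFunction a b G g) (ha : 0 < a) {X V : Type*}
    [TopologicalSpace X] [SeminormedAddCommGroup V] {f : X → V} (hf : Continuous f) :
    Continuous fun x => G ‖f x‖ := by
  simpa only [Function.comp_def, abs_norm] using (h.continuous_comp_abs ha).comp hf.norm

theorem tendsto_rpow_inv_div (h : IsOrliczFunction a b G g) (hq : 0 < q) (hqa : q < a) :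
    Tendsto (fun t : ℝ => G |t| ^ q⁻¹ / |t|) (𝓝 0) (𝓝 0) := by
  have he : 0 < a / q - 1 := sub_pos.2 ((one_lt_div hq).2 hqa)
  have hlim : Tendsto (fun t : ℝ => G 1 ^ q⁻¹ * |t| ^ (a / q - 1)) (𝓝 0) (𝓝 0) := by
    simpa [he.ne'] using
      ((continuous_abs.rpow_const fun _ => Or.inr he.le).const_mul (G 1 ^ q⁻¹)).tendsto 0
  have hnn (t : ℝ) := h.nonneg (abs_nonneg t)
  refine squeeze_zero' (Eventually.of_forall fun t => by have := hnn t; positivity) ?_ hlim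
  filter_upwards [Metric.closedBall_mem_nhds (0 : ℝ) one_pos] with t ht1
  rcases eq_or_ne t 0 with rfl | ht
  · simp [he.ne']
  have ht := abs_pos.2 ht
  have hG1 := h.nonneg zero_le_one
  rw [div_le_iff₀ ht, rpow_sub_one ht.ne', mul_assoc, div_mul_cancel₀ _ ht.ne']
  calc G |t| ^ q⁻¹ ≤ (G 1 * |t| ^ a) ^ q⁻¹ := by
        gcongr
        · exact hnn t
        · exact h.le_mul_rpow (hq.trans hqa) ht.le (mem_closedBall_zero_iff.1 ht1)
    _ = G 1 ^ q⁻¹ * |t| ^ (a / q) := by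
        rw [mul_rpow hG1 (by positivity), ← rpow_mul ht.le, div_eq_mul_inv]

theorem hasDerivAt_rpow_inv_zero (h : IsOrliczFunction a b G g) (hq : 0 < q) (hqa : q < a) :
    HasDerivAt (fun t : ℝ => G |t| ^ q⁻¹) 0 0 := by
  rw [hasDerivAt_iff_isLittleO_nhds_zero]
  simp only [zero_add, abs_zero, h.map_zero, zero_rpow (inv_ne_zero hq.ne'), smul_zero, sub_zero]
  rw [← isLittleO_abs_right, isLittleO_iff_tendsto fun t ht => by
    simp [abs_eq_zero.1 ht, h.map_zero, hq.ne']]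
  exact h.tendsto_rpow_inv_div hq hqa

theorem hasDerivAt_rpow_inv (h : IsOrliczFunction a b G g) {t : ℝ} (ht : t ≠ 0) :
    HasDerivAt (fun t : ℝ => G |t| ^ q⁻¹)
      (g |t| * SignType.sign t * q⁻¹ * G |t| ^ (q⁻¹ - 1)) t :=
  ((h.hasDerivAt _ (abs_pos.2 ht)).comp t (hasDerivAt_abs ht)).rpow_const
    (Or.inl (h.pos _ (abs_pos.2 ht)).ne')

theorem abs_deriv_rpow_inv_le (h : IsOrliczFunction a b G g) (hq : 0 < q) (hqa : q < a) (t : ℝ) :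
    |deriv (fun t : ℝ => G |t| ^ q⁻¹) t| ≤ b / q * (G |t| ^ q⁻¹ / |t|) := by
  rcases eq_or_ne t 0 with rfl | ht0
  · simp [(h.hasDerivAt_rpow_inv_zero hq hqa).deriv]
  have ht := abs_pos.2 ht0
  have hG := h.pos _ ht
  have hg : 0 ≤ g |t| :=
    nonneg_of_mul_nonneg_right ((mul_pos (hq.trans hqa) hG).le.trans (h.lower _ ht)) ht
  have hsign : |(SignType.sign t : ℝ)| = 1 := by
    rcases ht0.lt_or_gt with ht | ht <;> simp [ht]
  rw [(h.hasDerivAt_rpow_inv ht0).deriv, rpow_sub_one hG.ne', abs_mul, abs_mul, abs_mul, hsign,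
    abs_of_nonneg hg, abs_of_pos (by positivity : 0 < q⁻¹),
    abs_of_pos (by positivity : 0 < G |t| ^ q⁻¹ / G |t|)]
  calc g |t| * 1 * q⁻¹ * (G |t| ^ q⁻¹ / G |t|)
      = |t| * g |t| * (q⁻¹ * (G |t| ^ q⁻¹ / G |t|) / |t|) := by field_simp
    _ ≤ b * G |t| * (q⁻¹ * (G |t| ^ q⁻¹ / G |t|) / |t|) := by
        exact mul_le_mul_of_nonneg_right (h.upper _ ht) (by positivity)
    _ = b / q * (G |t| ^ q⁻¹ / |t|) := by field_simp

theorem contDiff_rpow_inv (h : IsOrliczFunction a b G g) (hq : 0 < q) (hqa : q < a) :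
    ContDiff ℝ 1 fun t : ℝ => G |t| ^ q⁻¹ := by
  have hzero := h.hasDerivAt_rpow_inv_zero hq hqa
  refine contDiff_one_iff_deriv.2 ⟨fun t => ?_, continuous_iff_continuousAt.2 fun t => ?_⟩
  · rcases eq_or_ne t 0 with rfl | ht
    · exact hzero.differentiableAt
    · exact (h.hasDerivAt_rpow_inv ht).differentiableAt
  rcases eq_or_ne t 0 with rfl | ht
  · rw [ContinuousAt, hzero.deriv]
    refine squeeze_zero_norm (h.abs_deriv_rpow_inv_le hq hqa) ?_
    simpa using (h.tendsto_rpow_inv_div hq hqa).const_mul (b / q)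
  · have hG : ContinuousAt (fun t => G |t|) t := (h.continuous_comp_abs (hq.trans hqa)).continuousAt
    have hg : ContinuousAt (fun t => g |t|) t := ContinuousAt.comp'
      (h.continuousOn_deriv.continuousAt (Ioi_mem_nhds (abs_pos.2 ht))) continuous_abs.continuousAt
    have hsign : ContinuousAt (fun t : ℝ => (SignType.sign t : ℝ)) t :=
      continuous_of_discreteTopology.continuousAt.comp' (continuousAt_sign_of_ne_zero ht)
    refine (((hg.mul hsign).mul_const q⁻¹).mul
      (hG.rpow_const (p := q⁻¹ - 1) (Or.inl (h.pos _ (abs_pos.2 ht)).ne'))).congr ?_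
    filter_upwards [eventually_ne_nhds ht] with s hs
    exact (h.hasDerivAt_rpow_inv hs).deriv.symm

theorem abs_deriv_rpow_inv_mul_rpow_le (h : IsOrliczFunction a b G g) (hq : 0 < q) (hqa : q < a)
    {η ρ : ℝ} (hη : 0 < η) (hη1 : η ≤ 1) (hρ : 0 ≤ ρ) (t : ℝ) :
    (|deriv (fun t : ℝ => G |t| ^ q⁻¹) t| * ρ) ^ q
      ≤ (b / q) ^ q * (η ^ q * G |t| + η ^ (q - b) * G ρ) := by
  have hb : 0 < b := (hq.trans hqa).trans_le h.exponent_le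
  have hGρ := h.nonneg hρ
  have hGt := h.nonneg (abs_nonneg t)
  rcases eq_or_ne t 0 with rfl | ht
  · rw [(h.hasDerivAt_rpow_inv_zero hq hqa).deriv, abs_zero, zero_mul, zero_rpow hq.ne']
    rw [abs_zero] at hGt
    positivity
  calc (|deriv (fun t : ℝ => G |t| ^ q⁻¹) t| * ρ) ^ q
      ≤ (b / q * (G |t| ^ q⁻¹ / |t|) * ρ) ^ q := by
        gcongr
        exact h.abs_deriv_rpow_inv_le hq hqa t
    _ = (b / q * (G |t| ^ q⁻¹ * (ρ / |t|))) ^ q := by ring_nf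
    _ = (b / q) ^ q * (G |t| * (ρ / |t|) ^ q) := by
        rw [mul_rpow (by positivity) (by positivity), mul_rpow (by positivity) (by positivity),
          rpow_inv_rpow hGt hq.ne']
    _ ≤ (b / q) ^ q * (η ^ q * G |t| + η ^ (q - b) * G ρ) := by
        gcongr
        exact h.mul_div_rpow_le_add hq hqa.le hη hη1 (abs_pos.2 ht) hρ

end IsOrliczFunction

/-! ### Conjugate functions -/

/-- The Young conjugate of a function `F` on `[0, ∞)`, with junk value `0` where the supremum is
infinite. -/
noncomputable def youngConjugate (F : ℝ → ℝ) (s : ℝ) : ℝ :=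
  sSup ((fun r => s * r - F r) '' Ici 0)

/-- The function `F` associated with `G`: the analogue of the Young conjugate of `G ^ q⁻¹` in which
the difference is taken between `q`-th powers. It has junk value `0` where the supremum is
infinite. -/
noncomputable def powerConjugate (q : ℝ) (G : ℝ → ℝ) (s : ℝ) : ℝ :=
  sSup ((fun r => (max ((s * r) ^ q - G r) 0) ^ q⁻¹) '' Ioi 0)

section Conjugate

variable {q : ℝ} {G : ℝ → ℝ}

theorem powerConjugate_nonneg (q : ℝ) (G : ℝ → ℝ) (s : ℝ) : 0 ≤ powerConjugate q G s :=
  Real.sSup_nonneg <| forall_mem_image.2 fun _ _ => rpow_nonneg (le_max_right _ _) _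

theorem powerConjugate_zero (hq : 0 < q) (hG : ∀ r, 0 ≤ r → 0 ≤ G r) :
    powerConjugate q G 0 = 0 := by
  refine (Real.sSup_nonpos <| forall_mem_image.2 fun r hr => ?_).antisymm
    (powerConjugate_nonneg q G 0)
  simp [hG r (le_of_lt hr), hq.ne']

theorem bddAbove_powerConjugate (hq : 0 < q) (hG : ∀ r, 0 ≤ r → 0 ≤ G r)
    (hlim : (fun r => r ^ q) =o[atTop] G) {s : ℝ} (hs : 0 ≤ s) :
    BddAbove ((fun r => (max ((s * r) ^ q - G r) 0) ^ q⁻¹) '' Ioi 0) := by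
  obtain ⟨M, hM⟩ := eventually_atTop.1 ((hlim.const_mul_left (s ^ q)).bound one_pos)
  refine ⟨s * |M|, forall_mem_image.2 fun r (hr : 0 < r) => ?_⟩
  have hGr := hG r hr.le
  rcases le_total M r with hMr | hrM
  · have hle : (s * r) ^ q ≤ G r := by
      have := hM r hMr
      rwa [norm_of_nonneg (by positivity), norm_of_nonneg hGr, one_mul, ← mul_rpow hs hr.le] at this
    rw [max_eq_right (sub_nonpos.2 hle), zero_rpow (inv_ne_zero hq.ne')]
    positivity
  · calc (max ((s * r) ^ q - G r) 0) ^ q⁻¹ ≤ ((s * r) ^ q) ^ q⁻¹ := by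
          gcongr
          exact max_le (sub_le_self _ hGr) (by positivity)
      _ = s * r := rpow_rpow_inv (by positivity) hq.ne'
      _ ≤ s * |M| := by gcongr; exact hrM.trans (le_abs_self M)

theorem mul_le_powerConjugate_add (hq : 1 ≤ q) (hG : ∀ r, 0 ≤ r → 0 ≤ G r)
    (hlim : (fun r => r ^ q) =o[atTop] G) {s r : ℝ} (hs : 0 ≤ s) (hr : 0 ≤ r) :
    s * r ≤ powerConjugate q G s + G r ^ q⁻¹ := by
  have hq0 : 0 < q := one_pos.trans_le hq
  have hGr := hG r hr
  rcases hr.eq_or_lt with rfl | hr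
  · rw [mul_zero]
    exact add_nonneg (powerConjugate_nonneg q G s) (by positivity)
  calc s * r = ((s * r) ^ q) ^ q⁻¹ := (rpow_rpow_inv (by positivity) hq0.ne').symm
    _ ≤ (max ((s * r) ^ q - G r) 0 + G r) ^ q⁻¹ := by
        gcongr
        exact sub_le_iff_le_add.1 (le_max_left _ _)
    _ ≤ (max ((s * r) ^ q - G r) 0) ^ q⁻¹ + G r ^ q⁻¹ :=
        rpow_add_le_add_rpow (le_max_right _ _) hGr (by positivity) (inv_le_one_of_one_le₀ hq)
    _ ≤ powerConjugate q G s + G r ^ q⁻¹ := by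
        gcongr
        exact le_csSup (bddAbove_powerConjugate hq0 hG hlim hs) (mem_image_of_mem _ hr)

theorem youngConjugate_powerConjugate_mem_Icc (hq : 1 ≤ q) (hG : ∀ r, 0 ≤ r → 0 ≤ G r)
    (hlim : (fun r => r ^ q) =o[atTop] G) {r : ℝ} (hr : 0 ≤ r) :
    youngConjugate (powerConjugate q G) r ∈ Icc 0 (G r ^ q⁻¹) := by
  have hle : ∀ x ∈ (fun s => r * s - powerConjugate q G s) '' Ici 0, x ≤ G r ^ q⁻¹ :=
    forall_mem_image.2 fun s hs => by
      rw [sub_le_iff_le_add', mul_comm]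
      exact mul_le_powerConjugate_add hq hG hlim hs hr
  refine ⟨le_csSup ⟨_, hle⟩ ⟨0, self_mem_Ici, ?_⟩, Real.sSup_le hle (rpow_nonneg (hG r hr) _)⟩
  simp [powerConjugate_zero (one_pos.trans_le hq) hG]

end Conjugate

/-! ### Averages and the Sobolev inequality on balls -/

theorem average_norm_rpow_rpow_inv_mono {α F : Type*} [MeasurableSpace α] {μ : Measure α}
    [IsFiniteMeasure μ] [NeZero μ] [NormedAddCommGroup F] {p q : ℝ} (hq : 0 < q) (hqp : q ≤ p)
    {f : α → F} (hf : MemLp f (.ofReal p) μ) :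
    (⨍ x, ‖f x‖ ^ q ∂μ) ^ q⁻¹ ≤ (⨍ x, ‖f x‖ ^ p ∂μ) ^ p⁻¹ := by
  lift q to NNReal using hq.le
  lift p to NNReal using hq.le.trans hqp
  rw [ENNReal.ofReal_coe_nnreal] at hf
  have hf := hf.smul_measure (ENNReal.inv_ne_top.2 (NeZero.ne (μ univ)))
  have hle := ENNReal.toReal_mono hf.eLpNorm_ne_top
    (eLpNorm_le_eLpNorm_of_exponent_le (ENNReal.coe_le_coe.2 hqp) hf.aestronglyMeasurable)
  rwa [toReal_eLpNorm hf.aestronglyMeasurable, toReal_eLpNorm hf.aestronglyMeasurable,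
    lpNorm_nnreal_eq_integral_norm_rpow (by exact_mod_cast hq.ne') hf.aestronglyMeasurable,
    lpNorm_nnreal_eq_integral_norm_rpow (by exact_mod_cast (hq.trans_le hqp).ne')
      hf.aestronglyMeasurable] at hle

theorem integrable_average_ball {X F : Type*} [MetricSpace X] [ProperSpace X]
    [MeasurableSpace X] [OpensMeasurableSpace X] {μ : Measure X} [IsFiniteMeasureOnCompacts μ]
    [NormedAddCommGroup F] {f : X → F} (hf : Continuous f) (x₀ : X) (R : ℝ) :
    Integrable f ((μ.restrict (ball x₀ R) univ)⁻¹ • μ.restrict (ball x₀ R)) :=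
  ((hf.continuousOn.integrableOn_compact (isCompact_closedBall x₀ R)).mono_set
    ball_subset_closedBall).to_average

theorem mul_norm_fderiv_comp_div_const {E : Type*} [NormedAddCommGroup E] [NormedSpace ℝ E] {R : ℝ}
    {Φ : ℝ → ℝ} {u : E → ℝ} {x : E} (hR : 0 < R) (hΦ : DifferentiableAt ℝ Φ (u x / R))
    (hu : DifferentiableAt ℝ u x) :
    R * ‖fderiv ℝ (fun x => Φ (u x / R)) x‖ = |deriv Φ (u x / R)| * ‖fderiv ℝ u x‖ := by
  have hquot : HasFDerivAt (fun x => u x / R) (R⁻¹ • fderiv ℝ u x) x := by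
    simpa only [div_eq_inv_mul] using hu.hasFDerivAt.const_mul R⁻¹
  have hcomp : HasFDerivAt (fun x => Φ (u x / R)) (deriv Φ (u x / R) • R⁻¹ • fderiv ℝ u x) x :=
    hΦ.hasDerivAt.comp_hasFDerivAt x hquot
  rw [hcomp.fderiv, norm_smul, norm_smul, norm_inv, norm_of_nonneg hR.le, norm_eq_abs]
  field_simp

theorem exists_mul_rpow_le_half {L q : ℝ} (hL : 0 ≤ L) (hq : 0 < q) :
    ∃ η : ℝ, 0 < η ∧ η ≤ 1 ∧ L * η ^ q ≤ 1 / 2 := by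
  refine ⟨(2 * L + 1)⁻¹ ^ q⁻¹, by positivity, rpow_le_one (by positivity)
    (inv_le_one_of_one_le₀ (by linarith)) (by positivity), ?_⟩
  rw [rpow_inv_rpow (by positivity) hq.ne', ← div_eq_mul_inv, div_le_div_iff₀ (by positivity)
    two_pos]
  linarith

section Sobolev

variable {E : Type*} [NormedAddCommGroup E] [NormedSpace ℝ E] [FiniteDimensional ℝ E]
  [MeasurableSpace E] [BorelSpace E] (μ : Measure E) [μ.IsAddHaarMeasure]

theorem measureReal_ball_rpow_inv_finrank [Nontrivial E] (x₀ : E) {R : ℝ} (hR : 0 ≤ R) :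
    μ.real (ball x₀ R) ^ (finrank ℝ E : ℝ)⁻¹
      = R * μ.real (ball 0 1) ^ (finrank ℝ E : ℝ)⁻¹ := by
  rw [Measure.real, Measure.addHaar_ball μ x₀ hR, ENNReal.toReal_mul,
    ENNReal.toReal_ofReal (by positivity), mul_rpow (by positivity) ENNReal.toReal_nonneg,
    pow_rpow_inv_natCast hR finrank_pos.ne', Measure.real]

variable {F : Type*} [NormedAddCommGroup F] [InnerProductSpace ℝ F] {p q : ℝ}

theorem integral_norm_rpow_rpow_inv_le_integral_fderiv [Nontrivial E] (hq : 1 ≤ q) (hp₀ : 0 < p)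
    (hp : p⁻¹ = q⁻¹ - (finrank ℝ E : ℝ)⁻¹) {w : E → F} (hw : ContDiff ℝ 1 w)
    (hcw : HasCompactSupport w) :
    (∫ x, ‖w x‖ ^ p ∂μ) ^ p⁻¹
      ≤ eLpNormLESNormFDerivOfEqInnerConst μ q * (∫ x, ‖fderiv ℝ w x‖ ^ q ∂μ) ^ q⁻¹ := by
  lift p to NNReal using hp₀.le
  lift q to NNReal using zero_le_one.trans hq
  have hDw := hw.continuous_fderiv one_ne_zero
  have hsob := eLpNorm_le_eLpNorm_fderiv_of_eq_inner μ hw hcw (mod_cast hq) finrank_pos hp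
  have hfin := (hDw.memLp_of_hasCompactSupport (p := q) (μ := μ) (hcw.fderiv ℝ)).eLpNorm_ne_top
  have hreal := ENNReal.toReal_mono (ENNReal.mul_ne_top ENNReal.coe_ne_top hfin) hsob
  rwa [ENNReal.toReal_mul, ENNReal.coe_toReal, toReal_eLpNorm hw.continuous.aestronglyMeasurable,
    toReal_eLpNorm hDw.aestronglyMeasurable,
    lpNorm_nnreal_eq_integral_norm_rpow (by exact_mod_cast hp₀.ne')
      hw.continuous.aestronglyMeasurable,
    lpNorm_nnreal_eq_integral_norm_rpow (by exact_mod_cast (one_pos.trans_le hq).ne')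
      hDw.aestronglyMeasurable] at hreal

theorem exists_average_ball_sobolev [Nontrivial E] (hq : 1 ≤ q) (hp₀ : 0 < p)
    (hp : p⁻¹ = q⁻¹ - (finrank ℝ E : ℝ)⁻¹) :
    ∃ K : ℝ, 0 ≤ K ∧ ∀ {R : ℝ}, 0 < R → ∀ (x₀ : E) {w : E → F}, ContDiff ℝ 1 w →
      tsupport w ⊆ ball x₀ R →
      (⨍ x in ball x₀ R, ‖w x‖ ^ p ∂μ) ^ p⁻¹
        ≤ K * (⨍ x in ball x₀ R, (R * ‖fderiv ℝ w x‖) ^ q ∂μ) ^ q⁻¹ := by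
  set C : NNReal := eLpNormLESNormFDerivOfEqInnerConst μ q
  set ω := μ.real (ball (0 : E) 1) ^ (finrank ℝ E : ℝ)⁻¹
  refine ⟨C * ω, by positivity, fun {R} hR x₀ w hw hsw => ?_⟩
  have hq0 : 0 < q := one_pos.trans_le hq
  have hcw : HasCompactSupport w := (isCompact_closedBall x₀ R).of_isClosed_subset
    (isClosed_tsupport w) (hsw.trans ball_subset_closedBall)
  have hI : ∫ x in ball x₀ R, ‖w x‖ ^ p ∂μ = ∫ x, ‖w x‖ ^ p ∂μ :=
    setIntegral_eq_integral_of_forall_compl_eq_zero fun x hx => by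
      simp [image_eq_zero_of_notMem_tsupport (notMem_subset hsw hx), hp₀.ne']
  have hJ : ∫ x in ball x₀ R, ‖fderiv ℝ w x‖ ^ q ∂μ = ∫ x, ‖fderiv ℝ w x‖ ^ q ∂μ :=
    setIntegral_eq_integral_of_forall_compl_eq_zero fun x hx => by
      simp [fderiv_of_notMem_tsupport ℝ (notMem_subset hsw hx), hq0.ne']
  simp only [mul_rpow hR.le (norm_nonneg _), setAverage_eq, smul_eq_mul, integral_const_mul]
  rw [hI, hJ]
  set V := μ.real (ball x₀ R)
  set I := ∫ x, ‖w x‖ ^ p ∂μ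
  set J := ∫ x, ‖fderiv ℝ w x‖ ^ q ∂μ
  have hV0 : 0 < V := ENNReal.toReal_pos (measure_ball_pos μ x₀ hR).ne' measure_ball_lt_top.ne
  calc (V⁻¹ * I) ^ p⁻¹ = V⁻¹ ^ p⁻¹ * I ^ p⁻¹ := mul_rpow (by positivity) (by positivity)
    _ ≤ V⁻¹ ^ p⁻¹ * (C * J ^ q⁻¹) := by
        gcongr
        exact integral_norm_rpow_rpow_inv_le_integral_fderiv μ hq hp₀ hp hw hcw
    -- `1 / p` and `1 / q` differ by `1 / dim E`, which turns the surplus of `V` into a factor `R`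
    _ = V⁻¹ ^ q⁻¹ * (R * ω) * (C * J ^ q⁻¹) := by
        rw [hp, rpow_sub (by positivity), inv_rpow hV0.le (finrank ℝ E : ℝ)⁻¹, div_inv_eq_mul,
          measureReal_ball_rpow_inv_finrank μ x₀ hR.le]
    _ = C * ω * (V⁻¹ * (R ^ q * J)) ^ q⁻¹ := by
        rw [mul_rpow (by positivity) (by positivity), mul_rpow (by positivity) (by positivity),
          rpow_rpow_inv hR.le hq0.ne']
        ring

end Sobolev

/-! ### The Sobolev inequality for `G(|u|/R)^{1/q}` -/

namespace IsOrliczFunction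

variable {E : Type*} [NormedAddCommGroup E] [NormedSpace ℝ E] [FiniteDimensional ℝ E]
  [MeasurableSpace E] [BorelSpace E] {a b p q R : ℝ} {G g : ℝ → ℝ} {u : E → ℝ}

theorem average_rpow_norm_fderiv_le (h : IsOrliczFunction a b G g) (hq : 0 < q) (hqa : q < a)
    {η : ℝ} (hη : 0 < η) (hη1 : η ≤ 1) (hR : 0 < R) (hu : ContDiff ℝ 1 u) (μ : Measure E)
    [IsFiniteMeasureOnCompacts μ] (x₀ : E) :
    ⨍ x in ball x₀ R, (R * ‖fderiv ℝ (fun x => G |u x / R| ^ q⁻¹) x‖) ^ q ∂μ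
      ≤ (b / q) ^ q * (η ^ q * (⨍ x in ball x₀ R, G |u x / R| ∂μ)
        + η ^ (q - b) * ⨍ x in ball x₀ R, G ‖fderiv ℝ u x‖ ∂μ) := by
  let ν := (μ.restrict (ball x₀ R) univ)⁻¹ • μ.restrict (ball x₀ R)
  have ha := hq.trans hqa
  have hGu : Integrable (fun x => G |u x / R|) ν :=
    integrable_average_ball (h.continuous_comp_norm ha (hu.continuous.div_const R)) x₀ R
  have hGDu : Integrable (fun x => G ‖fderiv ℝ u x‖) ν :=
    integrable_average_ball (h.continuous_comp_norm ha (hu.continuous_fderiv one_ne_zero)) x₀ R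
  have hpoint (x : E) : (R * ‖fderiv ℝ (fun x => G |u x / R| ^ q⁻¹) x‖) ^ q
      ≤ (b / q) ^ q * (η ^ q * G |u x / R| + η ^ (q - b) * G ‖fderiv ℝ u x‖) := by
    rw [mul_norm_fderiv_comp_div_const (Φ := fun t => G |t| ^ q⁻¹) hR
      ((h.contDiff_rpow_inv hq hqa).differentiable one_ne_zero _)
      (hu.differentiable one_ne_zero x)]
    exact h.abs_deriv_rpow_inv_mul_rpow_le hq hqa hη hη1 (norm_nonneg _) _
  calc ∫ x, (R * ‖fderiv ℝ (fun x => G |u x / R| ^ q⁻¹) x‖) ^ q ∂ν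
      ≤ ∫ x, (b / q) ^ q * (η ^ q * G |u x / R| + η ^ (q - b) * G ‖fderiv ℝ u x‖) ∂ν :=
        integral_mono_of_nonneg (.of_forall fun x => by positivity)
          (((hGu.const_mul _).add (hGDu.const_mul _)).const_mul _) (.of_forall hpoint)
    _ = (b / q) ^ q * (η ^ q * (∫ x, G |u x / R| ∂ν)
        + η ^ (q - b) * ∫ x, G ‖fderiv ℝ u x‖ ∂ν) := by
        rw [integral_const_mul, integral_add (hGu.const_mul _) (hGDu.const_mul _),
          integral_const_mul, integral_const_mul]

theorem average_le_rpow_average_rpow_inv (h : IsOrliczFunction a b G g) (hq : 0 < q) (hqp : q ≤ p)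
    (ha : 0 < a) (hR : 0 < R) (hu : Continuous u) (μ : Measure E)
    [IsFiniteMeasureOnCompacts μ] [μ.IsOpenPosMeasure] (x₀ : E) :
    ⨍ x in ball x₀ R, G |u x / R| ∂μ
      ≤ ((⨍ x in ball x₀ R, (G |u x / R| ^ q⁻¹) ^ p ∂μ) ^ p⁻¹) ^ q := by
  have hGu (x : E) : 0 ≤ G |u x / R| := h.nonneg (abs_nonneg _)
  have : IsFiniteMeasure (μ.restrict (ball x₀ R)) :=
    isFiniteMeasure_restrict.2 measure_ball_lt_top.ne
  have : NeZero (μ (ball x₀ R)) := ⟨(measure_ball_pos μ x₀ hR).ne'⟩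
  have hw : Continuous fun x => G |u x / R| ^ q⁻¹ :=
    (h.continuous_comp_norm ha (hu.div_const R)).rpow_const fun _ => Or.inr (by positivity)
  obtain ⟨C, hC⟩ := (isCompact_closedBall x₀ R).exists_bound_of_continuousOn hw.continuousOn
  have hmem : MemLp (fun x => G |u x / R| ^ q⁻¹) (.ofReal p) (μ.restrict (ball x₀ R)) :=
    .of_bound hw.aestronglyMeasurable C <|
      ae_restrict_of_forall_mem measurableSet_ball fun x hx => hC x (ball_subset_closedBall hx)
  have hmean := average_norm_rpow_rpow_inv_mono hq hqp hmem
  simp only [norm_of_nonneg (rpow_nonneg (hGu _) q⁻¹), rpow_inv_rpow (hGu _) hq.ne'] at hmean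
  exact (rpow_inv_le_iff_of_pos (integral_nonneg hGu) (rpow_nonneg (integral_nonneg fun x =>
    rpow_nonneg (rpow_nonneg (hGu x) _) _) _) hq).1 hmean

theorem exists_average_sobolev_add (μ : Measure E) [μ.IsAddHaarMeasure] [Nontrivial E]
    (hq : 1 ≤ q) (hp₀ : 0 < p) (hp : p⁻¹ = q⁻¹ - (finrank ℝ E : ℝ)⁻¹) (hb : 0 < b) :
    ∃ L : ℝ, 0 ≤ L ∧ ∀ {a : ℝ} {G g : ℝ → ℝ}, IsOrliczFunction a b G g → q < a →
      ∀ {R : ℝ}, 0 < R → ∀ (x₀ : E) {u : E → ℝ}, ContDiff ℝ 1 u → tsupport u ⊆ ball x₀ R →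
      ∀ {η : ℝ}, 0 < η → η ≤ 1 →
      ((⨍ x in ball x₀ R, (G |u x / R| ^ q⁻¹) ^ p ∂μ) ^ p⁻¹) ^ q
        ≤ L * (η ^ q * ((⨍ x in ball x₀ R, (G |u x / R| ^ q⁻¹) ^ p ∂μ) ^ p⁻¹) ^ q
          + η ^ (q - b) * ⨍ x in ball x₀ R, G ‖fderiv ℝ u x‖ ∂μ) := by
  obtain ⟨K, hK₀, hK⟩ := exists_average_ball_sobolev (F := ℝ) μ hq hp₀ hp
  have hq0 : 0 < q := one_pos.trans_le hq
  have hqp : q ≤ p := by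
    rw [← inv_le_inv₀ hp₀ hq0, hp]
    exact sub_le_self _ (by positivity)
  refine ⟨K ^ q * (b / q) ^ q, by positivity,
    fun {a G g} h hqa {R} hR x₀ {u} hu hsu {η} hη hη1 => ?_⟩
  have hmean := h.average_le_rpow_average_rpow_inv hq0 hqp (hq0.trans hqa) hR hu.continuous μ x₀
  have henergy := h.average_rpow_norm_fderiv_le hq0 hqa hη hη1 hR hu μ x₀
  set w : E → ℝ := fun x => G |u x / R| ^ q⁻¹
  have hw₀ (x : E) : 0 ≤ w x := rpow_nonneg (h.nonneg (abs_nonneg _)) _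
  have hw : ContDiff ℝ 1 w := (h.contDiff_rpow_inv hq0 hqa).comp (hu.div_const R)
  have hsw : tsupport w ⊆ ball x₀ R := (tsupport_comp_subset
    (g := fun t => G |t / R| ^ q⁻¹) (by simp [h.map_zero, hq0.ne']) u).trans hsu
  have hsobolev := hK hR x₀ hw hsw
  simp only [norm_of_nonneg (hw₀ _)] at hsobolev
  set A := (⨍ x in ball x₀ R, w x ^ p ∂μ) ^ p⁻¹
  set D := ⨍ x in ball x₀ R, G ‖fderiv ℝ u x‖ ∂μ
  set W := ⨍ x in ball x₀ R, (R * ‖fderiv ℝ w x‖) ^ q ∂μ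
  have hA : 0 ≤ A := rpow_nonneg (integral_nonneg fun x => rpow_nonneg (hw₀ x) _) _
  have hW : 0 ≤ W := integral_nonneg fun x => by positivity
  calc A ^ q ≤ (K * W ^ q⁻¹) ^ q := by gcongr
    _ = K ^ q * W := by rw [mul_rpow hK₀ (by positivity), rpow_inv_rpow hW hq0.ne']
    _ ≤ K ^ q * ((b / q) ^ q * (η ^ q * A ^ q + η ^ (q - b) * D)) := by
        gcongr
        exact henergy.trans (by gcongr)
    _ = K ^ q * (b / q) ^ q * (η ^ q * A ^ q + η ^ (q - b) * D) := by ring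

theorem exists_average_sobolev (μ : Measure E) [μ.IsAddHaarMeasure] [Nontrivial E]
    (hq : 1 ≤ q) (hp₀ : 0 < p) (hp : p⁻¹ = q⁻¹ - (finrank ℝ E : ℝ)⁻¹) (hb : 0 < b) :
    ∃ c : ℝ, 0 < c ∧ ∀ {a : ℝ} {G g : ℝ → ℝ}, IsOrliczFunction a b G g → q < a →
      ∀ {R : ℝ}, 0 < R → ∀ (x₀ : E) {u : E → ℝ}, ContDiff ℝ 1 u → tsupport u ⊆ ball x₀ R →
      (⨍ x in ball x₀ R, (G |u x / R| ^ q⁻¹) ^ p ∂μ) ^ p⁻¹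
        ≤ c * (⨍ x in ball x₀ R, G ‖fderiv ℝ u x‖ ∂μ) ^ q⁻¹ := by
  have hq0 : 0 < q := one_pos.trans_le hq
  obtain ⟨L, hL₀, hL⟩ := exists_average_sobolev_add μ hq hp₀ hp hb
  obtain ⟨η, hη, hη1, hLη⟩ := exists_mul_rpow_le_half hL₀ hq0
  refine ⟨(2 * (L + 1) * η ^ (q - b)) ^ q⁻¹, by positivity,
    fun {a G g} h hqa {R} hR x₀ {u} hu hsu => ?_⟩
  have hadd := hL h hqa hR x₀ hu hsu hη hη1
  set A := (⨍ x in ball x₀ R, (G |u x / R| ^ q⁻¹) ^ p ∂μ) ^ p⁻¹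
  set D := ⨍ x in ball x₀ R, G ‖fderiv ℝ u x‖ ∂μ
  have hA : 0 ≤ A := rpow_nonneg (integral_nonneg fun x =>
    rpow_nonneg (rpow_nonneg (h.nonneg (abs_nonneg _)) _) _) _
  have hD : 0 ≤ D := integral_nonneg fun x => h.nonneg (norm_nonneg _)
  have habsorb : A ^ q ≤ 2 * (L + 1) * η ^ (q - b) * D := by
    have hhalf : L * η ^ q * A ^ q ≤ 1 / 2 * A ^ q := by gcongr
    have : 0 ≤ η ^ (q - b) * D := by positivity
    linarith
  calc A = (A ^ q) ^ q⁻¹ := (rpow_rpow_inv hA hq0.ne').symm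
    _ ≤ (2 * (L + 1) * η ^ (q - b) * D) ^ q⁻¹ := by gcongr
    _ = (2 * (L + 1) * η ^ (q - b)) ^ q⁻¹ * D ^ q⁻¹ := mul_rpow (by positivity) hD

end IsOrliczFunction

theorem elliptic_sobolev_orlicz_general {E : Type*} [NormedAddCommGroup E] [NormedSpace ℝ E]
    [FiniteDimensional ℝ E] [Nontrivial E] [MeasurableSpace E] [BorelSpace E] (μ : Measure E)
    [μ.IsAddHaarMeasure] {p q b : ℝ} (hq : 1 ≤ q) (hp₀ : 0 < p)
    (hp : p⁻¹ = q⁻¹ - (finrank ℝ E : ℝ)⁻¹) (hb : 0 < b) :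
    ∃ c : ℝ, 0 < c ∧ ∀ {a : ℝ} {G g : ℝ → ℝ}, IsOrliczFunction a b G g → q < a →
      ∀ {R : ℝ}, 0 < R → ∀ (x₀ : E) {u : E → ℝ}, ContDiff ℝ 1 u →
      tsupport u ⊆ ball x₀ R →
      (⨍ x in ball x₀ R, youngConjugate (powerConjugate q G) (|u x| / R) ^ p ∂μ) ^ p⁻¹
        ≤ c * (⨍ x in ball x₀ R, G ‖fderiv ℝ u x‖ ∂μ) ^ q⁻¹ := by
  obtain ⟨c, hc, hsobolev⟩ := IsOrliczFunction.exists_average_sobolev μ hq hp₀ hp hb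
  refine ⟨c, hc, fun {a G g} h hqa {R} hR x₀ {u} hu hsu =>
    le_trans ?_ (hsobolev h hqa hR x₀ hu hsu)⟩
  have hconj (x : E) := youngConjugate_powerConjugate_mem_Icc hq (fun _ => h.nonneg)
    (h.isLittleO_rpow hqa) (abs_nonneg (u x / R))
  have hcont : Continuous fun x => (G |u x / R| ^ q⁻¹) ^ p :=
    ((h.continuous_comp_norm (by linarith) (hu.continuous.div_const R)).rpow_const
      fun _ => Or.inr (by positivity)).rpow_const fun _ => Or.inr hp₀.le
  have hdiv (x : E) : |u x| / R = |u x / R| := by rw [abs_div, abs_of_pos hR]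
  simp only [hdiv]
  gcongr
  · exact integral_nonneg fun x => rpow_nonneg (hconj x).1 p
  · exact integral_mono_of_nonneg (.of_forall fun x => rpow_nonneg (hconj x).1 p)
      (integrable_average_ball hcont x₀ R)
      (.of_forall fun x => rpow_le_rpow (hconj x).1 (hconj x).2 hp₀.le)

/-- Elliptic Sobolev inequality in Orlicz form: for `1 ≤ q < min{n, g₀}` and
`q* = nq/(n−q)`, there is `c > 0` depending only on `n, g₁, q` such that for every ball
`B_R` and every `u ∈ C_c^∞(B_R)`,
`(⨍_{B_R} F̃(|u|/R)^{q*})^{1/q*} ≤ c·(⨍_{B_R} G(|Du|))^{1/q}`. -/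
theorem elliptic_sobolev_orlicz
    (n : ℕ) (hn : 2 ≤ n) (g₁ q : ℝ) (hq1 : 1 ≤ q) (hqn : q < n) (hg₁q : q < g₁) :
    ∃ c : ℝ, 0 < c ∧
      ∀ (g₀ : ℝ), 1 < g₀ → g₀ ≤ g₁ → q < g₀ →
      ∀ (g g' : ℝ → ℝ),
        (∀ s, 0 < s → 0 < g s) →
        (∀ s, 0 < s → HasDerivAt g (g' s) s) →
        ContinuousOn g' (Set.Ioi 0) →
        (∀ s, 0 < s → (g₀ - 1) * g s ≤ s * g' s ∧ s * g' s ≤ (g₁ - 1) * g s) →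
      ∀ (G F Ft : ℝ → ℝ),
        (∀ s, G s = ∫ r in (0:ℝ)..s, g r) →
        (∀ s, F s = sSup ((fun r => (max ((s * r) ^ q - G r) 0) ^ (1 / q)) '' Set.Ioi 0)) →
        (∀ s, Ft s = sSup ((fun r => s * r - F r) '' Set.Ici 0)) →
      ∀ (R : ℝ), 0 < R → ∀ (x₀ : EuclideanSpace ℝ (Fin n))
        (u : EuclideanSpace ℝ (Fin n) → ℝ),
        ContDiff ℝ (⊤ : ℕ∞) u → HasCompactSupport u → tsupport u ⊆ Metric.ball x₀ R →
        (⨍ x in Metric.ball x₀ R, Ft (|u x| / R) ^ (n * q / (n - q)))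
            ^ (1 / (n * q / (n - q)))
          ≤ c * (⨍ x in Metric.ball x₀ R, G ‖fderiv ℝ u x‖) ^ (1 / q) := by
  have hp : ((n * q / (n - q) : ℝ))⁻¹ = q⁻¹ - (finrank ℝ (EuclideanSpace ℝ (Fin n)) : ℝ)⁻¹ := by
    have := sub_pos.2 hqn
    rw [finrank_euclideanSpace_fin]
    field_simp
  have : Nonempty (Fin n) := ⟨⟨0, by omega⟩⟩
  obtain ⟨c, hc, hsobolev⟩ := elliptic_sobolev_orlicz_general
    (volume : Measure (EuclideanSpace ℝ (Fin n))) hq1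
    (div_pos (by positivity) (sub_pos.2 hqn)) hp (b := g₁) (by linarith)
  refine ⟨c, hc, fun g₀ hg₀ _ hqg₀ g g' hpos hderiv _ hgrowth G F Ft hG hF hFt R hR x₀ u hu _
    hsu => ?_⟩
  have hg : HasPowerGrowth (g₀ - 1) (g₁ - 1) g g' :=
    ⟨hpos, hderiv, fun s hs => (hgrowth s hs).1, fun s hs => (hgrowth s hs).2⟩
  have hGg : IsOrliczFunction g₀ g₁ G g :=
    funext hG ▸ hg.isOrliczFunction_integral (one_pos.trans hg₀)
  have hF : F = powerConjugate q G := funext fun s => by simp only [hF, one_div, powerConjugate]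
  have hFt : Ft = youngConjugate (powerConjugate q G) := funext fun s => hF ▸ hFt s
  simpa only [hFt, one_div] using hsobolev hGg hqg₀ hR x₀ (hu.of_le (mod_cast le_top)) hsu
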